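/- Let k be an algebraic closure of F, let m ≥ 1, and let v = (v_1,…,v_n) ∈ F^n. The zero set in k³ of the ideal I = ⟨X^{q+1} − Y^q − Y⟩ + ⟨Z − H_v, X^{q²} − X⟩^m of k[X,Y,Z] is exactly {(α_i, β_i, v_i) : 1 ≤ i ≤ n}. -/

import Mathlib

open MvPolynomial

/-- The polynomial `H_i ∈ F[X,Y]` attached to the rational point `(α, β)` of the Hermitian
curve: `H = −∏_{a ∈ F, a ≠ α} (X − a) · ∏_{b ∈ F, b ≠ β, b^q + b = β^q + β} (Y − b)`. -/
noncomputable def Hpoly (q : ℕ) {F : Type*} [Field F] [Fintype F] [DecidableEq F]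
    (α β : F) : MvPolynomial (Fin 2) F :=
  -((∏ a ∈ Finset.univ.erase α, (X 0 - C a)) *
    ∏ b ∈ (Finset.univ.filter fun b : F => b ^ q + b = β ^ q + β).erase β, (X 1 - C b))

/-!
The zero set of `J ^ m` does not depend on `m ≥ 1`, so a point `(x, y, z)` is a zero of the ideal
iff it satisfies the three generating equations. The equation `x ^ q² = x` says `x ∈ F`. On the
curve `y ^ q = x ^ (q + 1) - y`, and applying Frobenius once more gives
`y ^ q² = x ^ (q² + q) - (x ^ (q + 1) - y) = y`, so `y ∈ F` as well and `(x, y)` is some `P i`.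
Finally `z = H_v (P i) = v i`, because `H_j (P i)` is the Kronecker delta: the two products of
differences of roots in `H_j (P j)` are values of the derivatives of `X ^ q² - X` and of
`Y ^ q + Y - t`, which are the constants `-1` and `1`.
-/

open scoped Polynomial

section Frobenius

variable {R : Type*} [CommRing R] {p n : ℕ} [ExpChar R p]

lemma pow_sq_eq_self_of_hermitian {x y : R} (hx : x ^ (p ^ n) ^ 2 = x)
    (hxy : x ^ (p ^ n + 1) = y ^ p ^ n + y) : y ^ (p ^ n) ^ 2 = y :=
  calc y ^ (p ^ n) ^ 2 = (x ^ (p ^ n + 1) - y) ^ p ^ n := by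
        rw [hxy, add_sub_cancel_right, ← pow_mul y, sq]
    _ = x ^ (p ^ n) ^ 2 * x ^ p ^ n - y ^ p ^ n := by rw [sub_pow_expChar_pow]; ring
    _ = x ^ (p ^ n + 1) - y ^ p ^ n := by rw [hx]; ring
    _ = y := by rw [hxy, add_sub_cancel_left]

lemma pow_add_self_pow_eq_self {b : R} (hb : b ^ (p ^ n) ^ 2 = b) :
    (b ^ p ^ n + b) ^ p ^ n = b ^ p ^ n + b := by
  rw [add_pow_expChar_pow, ← pow_mul, ← sq, hb, add_comm]

lemma X_pow_add_X_sub_C_dvd_X_pow_sq_sub_X {t : R} (ht : t ^ p ^ n = t) :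
    (Polynomial.X ^ p ^ n + (Polynomial.X - Polynomial.C t) : R[X]) ∣
      Polynomial.X ^ (p ^ n) ^ 2 - Polynomial.X := by
  set g : R[X] := Polynomial.X ^ p ^ n + (Polynomial.X - Polynomial.C t) with hg
  have g_pow : g ^ p ^ n =
      Polynomial.X ^ (p ^ n) ^ 2 + (Polynomial.X ^ p ^ n - Polynomial.C t) := by
    rw [hg, add_pow_expChar_pow, sub_pow_expChar_pow, ← Polynomial.C_pow, ht, ← pow_mul, ← sq]
  have g_pow_sub : g ^ p ^ n - g = Polynomial.X ^ (p ^ n) ^ 2 - Polynomial.X := by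
    rw [g_pow, hg]; ring
  rw [← g_pow_sub]
  exact dvd_sub (dvd_pow_self g (expChar_pow_pos R p n).ne') dvd_rfl

end Frobenius

lemma prod_erase_sub_eq_eval_derivative {R : Type*} [CommRing R] [IsDomain R] [DecidableEq R]
    {g : R[X]} (hsplits : g.Splits) (hmonic : g.Monic) {S : Finset R} (hS : g.roots = S.val)
    {β : R} (hβ : β ∈ S) : ∏ b ∈ S.erase β, (β - b) = g.derivative.eval β := by
  rw [hsplits.eval_root_derivative hmonic (hS ▸ hβ), hS, ← Finset.erase_val]
  rfl

lemma forall_mem_span_add_span_pow_map_eq_zero_iff {A B : Type*} [CommRing A] [CommRing B]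
    [IsDomain B] (φ : A →+* B) (s t : Set A) {m : ℕ} (hm : m ≠ 0) :
    (∀ f ∈ Ideal.span s + Ideal.span t ^ m, φ f = 0) ↔
      (∀ f ∈ s, φ f = 0) ∧ ∀ f ∈ t, φ f = 0 := by
  have : (RingHom.ker φ).IsPrime := RingHom.ker_isPrime φ
  change _ ≤ RingHom.ker φ ↔ s ⊆ RingHom.ker φ ∧ t ⊆ RingHom.ker φ
  rw [Submodule.add_eq_sup, sup_le_iff, Ideal.IsPrime.pow_le_iff hm, Ideal.span_le, Ideal.span_le]

lemma eval_map_rename_of_comp_eq {A B σ τ : Type*} [CommSemiring A] [CommSemiring B]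
    {φ : A →+* B} {e : σ → τ} {x : σ → A} {y : τ → B} (hxy : y ∘ e = φ ∘ x)
    (f : MvPolynomial σ A) : eval y (map φ (rename e f)) = φ (eval x f) := by
  rw [eval_map, eval₂_rename, hxy, eval₂_comp]

section FiniteField

variable {F : Type*} [Field F] [Fintype F]

lemma splits_X_pow_card_sub_X :
    (Polynomial.X ^ Fintype.card F - Polynomial.X : F[X]).Splits := by
  rw [Polynomial.splits_iff_card_roots, FiniteField.roots_X_pow_card_sub_X,
    FiniteField.X_pow_card_sub_X_natDegree_eq F Fintype.one_lt_card]
  rfl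

lemma exists_algebraMap_eq_of_pow_card_eq_self {k : Type*} [CommRing k] [IsDomain k] [Algebra F k]
    {y : k} (hy : y ^ Fintype.card F = y) : ∃ a : F, algebraMap F k a = y :=
  splits_X_pow_card_sub_X.mem_range_of_isRoot
    (FiniteField.X_pow_card_sub_X_ne_zero F Fintype.one_lt_card) (by simp [hy])

lemma nodup_roots_of_dvd_X_pow_card_sub_X {g : F[X]}
    (hdvd : g ∣ Polynomial.X ^ Fintype.card F - Polynomial.X) : g.roots.Nodup := by
  have roots_le := Polynomial.roots.le_of_dvd
    (FiniteField.X_pow_card_sub_X_ne_zero F Fintype.one_lt_card) hdvd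
  rw [FiniteField.roots_X_pow_card_sub_X] at roots_le
  exact Multiset.nodup_of_le roots_le Finset.univ.nodup

lemma exists_expChar_pow_of_card_eq_pow {q r : ℕ} (hr : r ≠ 0) (hF : Fintype.card F = q ^ r) :
    ∃ p n : ℕ, ExpChar F p ∧ q = p ^ n := by
  obtain ⟨p, _, s, hp, hcard⟩ := FiniteField.card' F
  obtain ⟨n, -, hn⟩ := (Nat.dvd_prime_pow hp).1 (hcard ▸ hF ▸ dvd_pow_self q hr)
  exact ⟨p, n, ExpChar.prime hp, hn⟩

lemma exists_algebraMap_eq_of_hermitian {q : ℕ} (hF : Fintype.card F = q ^ 2) {k : Type*}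
    [CommRing k] [IsDomain k] [Algebra F k] {x y : k} (hx : x ^ q ^ 2 = x)
    (hxy : x ^ (q + 1) = y ^ q + y) :
    ∃ a b : F, a ^ (q + 1) = b ^ q + b ∧ algebraMap F k a = x ∧ algebraMap F k b = y := by
  have hy : y ^ q ^ 2 = y := by
    obtain ⟨p, n, _, rfl⟩ := exists_expChar_pow_of_card_eq_pow two_ne_zero hF
    have : ExpChar k p := expChar_of_injective_algebraMap (algebraMap F k).injective p
    exact pow_sq_eq_self_of_hermitian hx hxy
  obtain ⟨a, rfl⟩ := exists_algebraMap_eq_of_pow_card_eq_self (F := F) (hF ▸ hx)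
  obtain ⟨b, rfl⟩ := exists_algebraMap_eq_of_pow_card_eq_self (F := F) (hF ▸ hy)
  exact ⟨a, b, (algebraMap F k).injective (by simpa using hxy), rfl, rfl⟩

variable [DecidableEq F]

lemma prod_univ_erase_sub (α : F) : ∏ a ∈ Finset.univ.erase α, (α - a) = -1 := by
  have hmonic : (Polynomial.X ^ Fintype.card F - Polynomial.X : F[X]).Monic :=
    Polynomial.monic_X_pow_sub (by simpa using Fintype.one_lt_card)
  rw [prod_erase_sub_eq_eval_derivative splits_X_pow_card_sub_X hmonic
    (FiniteField.roots_X_pow_card_sub_X F) (Finset.mem_univ α)]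
  simp [Polynomial.derivative_X_pow]

lemma prod_trace_fiber_erase_sub {q : ℕ} (hF : Fintype.card F = q ^ 2) {t β : F}
    (hβ : β ^ q + β = t) :
    ∏ b ∈ (Finset.univ.filter fun b : F => b ^ q + b = t).erase β, (β - b) = 1 := by
  set g : F[X] := Polynomial.X ^ q + (Polynomial.X - Polynomial.C t) with hg
  have hdvd : g ∣ Polynomial.X ^ Fintype.card F - Polynomial.X := by
    obtain ⟨p, n, _, rfl⟩ := exists_expChar_pow_of_card_eq_pow two_ne_zero hF
    have ht : t ^ p ^ n = t :=
      hβ ▸ pow_add_self_pow_eq_self (by rw [← hF, FiniteField.pow_card])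
    exact hF ▸ X_pow_add_X_sub_C_dvd_X_pow_sq_sub_X ht
  have hsplits : g.Splits := splits_X_pow_card_sub_X.of_dvd
    (FiniteField.X_pow_card_sub_X_ne_zero F Fintype.one_lt_card) hdvd
  have one_lt_q : 1 < q := (one_lt_pow_iff two_ne_zero).1 (hF ▸ Fintype.one_lt_card)
  have hmonic : g.Monic := Polynomial.monic_X_pow_add (by simpa using one_lt_q)
  have hroots : g.roots = (Finset.univ.filter fun b : F => b ^ q + b = t).val := by
    refine (Multiset.Nodup.ext (nodup_roots_of_dvd_X_pow_card_sub_X hdvd)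
      (Finset.nodup _)).2 fun b => ?_
    rw [Polynomial.mem_roots hmonic.ne_zero]
    simp [hg, ← add_sub_assoc, sub_eq_zero]
  have cast_q : (q : F) = 0 := by simpa [hF] using FiniteField.cast_card_eq_zero F
  rw [prod_erase_sub_eq_eval_derivative hsplits hmonic hroots (by simpa using hβ)]
  simp [hg, Polynomial.derivative_X_pow, cast_q]

lemma eval_Hpoly_self {q : ℕ} (hF : Fintype.card F = q ^ 2) (α β : F) :
    eval ![α, β] (Hpoly q α β) = 1 := by
  simp [Hpoly, prod_univ_erase_sub, prod_trace_fiber_erase_sub hF rfl]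

lemma eval_Hpoly_of_ne {q : ℕ} {α β a b : F} (hαβ : α ^ (q + 1) = β ^ q + β)
    (hab : a ^ (q + 1) = b ^ q + b) (hne : (α, β) ≠ (a, b)) :
    eval ![a, b] (Hpoly q α β) = 0 := by
  simp only [Hpoly, map_neg, map_mul, eval_prod, map_sub, eval_X, eval_C, neg_eq_zero,
    mul_eq_zero, Finset.prod_eq_zero_iff]
  by_cases h : a = α
  · subst h
    have hb : b ≠ β := fun h => hne (by rw [h])
    exact .inr ⟨b, by simp [hb, ← hab, hαβ], by simp⟩
  · exact .inl ⟨a, by simp [h], by simp⟩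

lemma eval_sum_C_mul_Hpoly {q : ℕ} (hF : Fintype.card F = q ^ 2) {ι : Type*} [Fintype ι]
    {P : ι → F × F} (hPinj : Function.Injective P)
    (hPcurve : ∀ i, (P i).1 ^ (q + 1) = (P i).2 ^ q + (P i).2) (v : ι → F) (i : ι) :
    eval ![(P i).1, (P i).2] (∑ j, C (v j) * Hpoly q (P j).1 (P j).2) = v i := by
  rw [map_sum, Finset.sum_eq_single_of_mem i (Finset.mem_univ i)]
  · rw [map_mul, eval_C, eval_Hpoly_self hF, mul_one]
  · intro j _ hji
    rw [map_mul, eval_Hpoly_of_ne (hPcurve j) (hPcurve i) (hPinj.ne hji), mul_zero]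

lemma eval_map_rename_sum_C_mul_Hpoly {q : ℕ} (hF : Fintype.card F = q ^ 2) {k : Type*}
    [CommSemiring k] [Algebra F k] {ι : Type*} [Fintype ι] {P : ι → F × F}
    (hPinj : Function.Injective P)
    (hPcurve : ∀ i, (P i).1 ^ (q + 1) = (P i).2 ^ q + (P i).2) (v : ι → F)
    {p : Fin 3 → k} {i : ι} (hp0 : p 0 = algebraMap F k (P i).1)
    (hp1 : p 1 = algebraMap F k (P i).2) :
    eval p (map (algebraMap F k) (rename (Fin.castSucc : Fin 2 → Fin 3)
      (∑ j, C (v j) * Hpoly q (P j).1 (P j).2))) = algebraMap F k (v i) := by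
  have hp : p ∘ Fin.castSucc = algebraMap F k ∘ ![(P i).1, (P i).2] := by
    ext j; fin_cases j <;> simp [hp0, hp1]
  rw [eval_map_rename_of_comp_eq hp, eval_sum_C_mul_Hpoly hF hPinj hPcurve]

end FiniteField

theorem stmt_5_general {q : ℕ} {F : Type*} [Field F] [Fintype F] [DecidableEq F]
    (hF : Fintype.card F = q ^ 2) (k : Type*) [CommRing k] [IsDomain k] [Algebra F k]
    {m : ℕ} (hm : m ≠ 0) {ι : Type*} [Fintype ι] {P : ι → F × F} (hPinj : Function.Injective P)
    (hPcurve : ∀ i, (P i).1 ^ (q + 1) = (P i).2 ^ q + (P i).2)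
    (hPsurj : ∀ a b : F, a ^ (q + 1) = b ^ q + b → ∃ i, P i = (a, b)) (v : ι → F) :
    {p : Fin 3 → k | ∀ f ∈ Ideal.span {(X 0 : MvPolynomial (Fin 3) k) ^ (q + 1) - X 1 ^ q - X 1}
        + (Ideal.span {X 2 - map (algebraMap F k)
              (rename (Fin.castSucc : Fin 2 → Fin 3) (∑ i, C (v i) * Hpoly q (P i).1 (P i).2)),
            (X 0 : MvPolynomial (Fin 3) k) ^ (q ^ 2) - X 0}) ^ m,
      eval p f = 0} =
    {p : Fin 3 → k | ∃ i, p =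
      ![algebraMap F k (P i).1, algebraMap F k (P i).2, algebraMap F k (v i)]} := by
  ext p
  simp only [Set.mem_ofPred_eq, forall_mem_span_add_span_pow_map_eq_zero_iff (eval p) _ _ hm,
    Set.mem_singleton_iff, Set.mem_insert_iff, forall_eq, forall_eq_or_imp, map_sub, map_add,
    map_pow, eval_X, sub_sub, sub_eq_zero]
  constructor
  · rintro ⟨hcurve, hz, hx⟩
    obtain ⟨a, b, hab, ha, hb⟩ := exists_algebraMap_eq_of_hermitian hF hx hcurve
    obtain ⟨i, hi⟩ := hPsurj a b hab
    have hp0 : p 0 = algebraMap F k (P i).1 := by rw [hi, ha]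
    have hp1 : p 1 = algebraMap F k (P i).2 := by rw [hi, hb]
    have hp2 : p 2 = algebraMap F k (v i) :=
      hz.trans (eval_map_rename_sum_C_mul_Hpoly hF hPinj hPcurve v hp0 hp1)
    refine ⟨i, ?_⟩
    ext j
    fin_cases j
    exacts [hp0, hp1, hp2]
  · rintro ⟨i, rfl⟩
    refine ⟨?_, (eval_map_rename_sum_C_mul_Hpoly hF hPinj hPcurve v rfl rfl).symm, ?_⟩
    · simpa using congrArg (algebraMap F k) (hPcurve i)
    · simp [← map_pow, ← hF, FiniteField.pow_card]

/-- Let `k` be an algebraic closure of `F`, let `m ≥ 1`, and let `v ∈ F^n`. The zero set in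
`k³` of the ideal `I = ⟨X^{q+1} − Y^q − Y⟩ + ⟨Z − H_v, X^{q²} − X⟩^m` of `k[X,Y,Z]` is
exactly `{(α_i, β_i, v_i) : 1 ≤ i ≤ n}`. -/
theorem stmt_5 (q : ℕ) (hq : IsPrimePow q) (F : Type*) [Field F] [Fintype F] [DecidableEq F]
    (hF : Fintype.card F = q ^ 2)
    (k : Type*) [Field k] [Algebra F k] [IsAlgClosure F k]
    (m : ℕ) (hm : 1 ≤ m)
    (P : Fin (q ^ 3) → F × F)
    (hPinj : Function.Injective P)
    (hPcurve : ∀ i, (P i).1 ^ (q + 1) = (P i).2 ^ q + (P i).2)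
    (hPsurj : ∀ a b : F, a ^ (q + 1) = b ^ q + b → ∃ i, P i = (a, b))
    (v : Fin (q ^ 3) → F) :
    {p : Fin 3 → k | ∀ f ∈ Ideal.span {(X 0 : MvPolynomial (Fin 3) k) ^ (q + 1) - X 1 ^ q - X 1}
        + (Ideal.span {X 2 - MvPolynomial.map (algebraMap F k)
              (MvPolynomial.rename (Fin.castSucc : Fin 2 → Fin 3)
                (∑ i, C (v i) * Hpoly q (P i).1 (P i).2)),
            (X 0 : MvPolynomial (Fin 3) k) ^ (q ^ 2) - X 0}) ^ m,
      MvPolynomial.eval p f = 0} =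
    {p : Fin 3 → k | ∃ i, p =
      ![algebraMap F k (P i).1, algebraMap F k (P i).2, algebraMap F k (v i)]} := by
  exact stmt_5_general hF k (Nat.one_le_iff_ne_zero.1 hm) hPinj hPcurve hPsurj v
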